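/- arXiv:1609.08303 — 3 statements merged into one kernel-verified Lean document; each statement's English description precedes it below -/
import Mathlib

section
/- Let p, q > 1 be coprime integers with p odd and r̄ odd. Let ρ be an integer with 0 ≤ ρ ≤ (p+1)/2 and r_ρ ≥ (p+1)/2. Then δ + ρ ∉ S(p,q). -/
/-!
If `s` inverts `q` modulo `p`, then in any representation `n = t * p + u * q` we have
`u ≡ n * s (mod p)`, so `n` lies in `S(p, q)` exactly when it does so with `u` the least
nonnegative residue of `n * s`. For `n = δ + ρ` with `p` and `s` odd this residue is `r_ρ`, because
`δ * s ≡ -(p - 1) / 2 * (s - 1) = -(p - 1) * ((s - 1) / 2) ≡ (s - 1) / 2 (mod p)`.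
If `r_ρ ≥ (p + 1) / 2`, then `r_ρ * q ≥ (p + 1) / 2 * q = δ + q + (p - 1) / 2`, which exceeds
`δ + ρ` as soon as `ρ < q + (p - 1) / 2`.
-/

/-- The numerical semigroup generated by `p` and `q`:
all integers of the form `t*p + u*q` with `t, u ≥ 0`. -/
def Spq (p q : ℤ) : Set ℤ := {n : ℤ | ∃ t u : ℤ, 0 ≤ t ∧ 0 ≤ u ∧ n = t * p + u * q}

/-- The set of integers `s ≥ 0` such that `δ, δ+1, …, δ+s` either all belong to `S(p,q)`
or none of them does, where `δ = (p-1)*(q-1)/2`.  `K(p,q)` is the greatest element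
of this set. -/
def KSet (p q : ℤ) : Set ℤ :=
  {s : ℤ | 0 ≤ s ∧ ∀ ρ : ℤ, 0 ≤ ρ → ρ ≤ s →
    ((p - 1) * (q - 1) / 2 + ρ ∈ Spq p q ↔ (p - 1) * (q - 1) / 2 ∈ Spq p q)}

theorem mem_Spq_iff_emod_mul_le {p q s : ℤ} (hp : 0 < p) (hq : 0 ≤ q)
    (hs : q * s ≡ 1 [ZMOD p]) (n : ℤ) :
    n ∈ Spq p q ↔ n * s % p * q ≤ n := by
  constructor
  · rintro ⟨t, u, ht, hu, rfl⟩
    have hmod : (t * p + u * q) * s ≡ u [ZMOD p] :=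
      calc (t * p + u * q) * s = t * s * p + u * (q * s) := by ring
        _ ≡ u * (q * s) [ZMOD p] := Int.mul_modulus_add_modEq_iff.mpr .rfl
        _ ≡ u * 1 [ZMOD p] := hs.mul_left u
        _ = u := mul_one u
    have hmin : u % p ≤ u := by
      rw [Int.emod_def]
      exact sub_le_self u (mul_nonneg hp.le (Int.ediv_nonneg hu hp.le))
    calc (t * p + u * q) * s % p * q = u % p * q := by rw [hmod.eq]
      _ ≤ u * q := mul_le_mul_of_nonneg_right hmin hq
      _ ≤ t * p + u * q := le_add_of_nonneg_left (mul_nonneg ht hp.le)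
  · intro hle
    have hmod : n * s % p * q ≡ n [ZMOD p] :=
      calc n * s % p * q ≡ n * s * q [ZMOD p] := (Int.mod_modEq _ _).mul_right q
        _ = n * (q * s) := by ring
        _ ≡ n * 1 [ZMOD p] := hs.mul_left n
        _ = n := mul_one n
    obtain ⟨t, ht⟩ := hmod.dvd
    have ht0 : 0 ≤ t := nonneg_of_mul_nonneg_right (ht ▸ sub_nonneg.mpr hle) hp
    exact ⟨t, n * s % p, ht0, Int.emod_nonneg _ hp.ne', by linarith⟩

theorem sub_one_mul_sub_one_ediv_two {p : ℤ} (hp : Odd p) (q : ℤ) :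
    (p - 1) * (q - 1) / 2 = (p - 1) / 2 * (q - 1) :=
  Int.mul_ediv_assoc' _ (hp.sub_odd odd_one).two_dvd

theorem sub_one_mul_sub_one_ediv_two_mul_modEq {p q s : ℤ} (hp : Odd p) (hodd : Odd s)
    (hs : q * s ≡ 1 [ZMOD p]) :
    (p - 1) * (q - 1) / 2 * s ≡ (s - 1) / 2 [ZMOD p] := by
  rw [sub_one_mul_sub_one_ediv_two hp]
  obtain ⟨a, rfl⟩ := hp
  obtain ⟨b, rfl⟩ := hodd
  simp only [add_sub_cancel_right, Int.mul_ediv_cancel_left _ two_ne_zero]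
  calc a * (q - 1) * (2 * b + 1) = a * (q * (2 * b + 1)) - a * (2 * b + 1) := by ring
    _ ≡ a * 1 - a * (2 * b + 1) [ZMOD 2 * a + 1] := (hs.mul_left a).sub_right _
    _ = b - b * (2 * a + 1) := by ring
    _ ≡ b [ZMOD 2 * a + 1] := Int.modEq_iff_dvd.mpr ⟨b, by ring⟩

theorem stmt11_general {p q s ρ : ℤ} (hp : 0 < p) (hq : 0 ≤ q) (hpodd : Odd p)
    (hs : q * s ≡ 1 [ZMOD p]) (hodd : Odd s) (hρ : ρ < q + (p - 1) / 2)
    (hrρ : (p + 1) / 2 ≤ ((s - 1) / 2 + ρ * s) % p) :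
    (p - 1) * (q - 1) / 2 + ρ ∉ Spq p q := by
  rw [mem_Spq_iff_emod_mul_le hp hq hs, not_le]
  have hresidue : ((p - 1) * (q - 1) / 2 + ρ) * s ≡ (s - 1) / 2 + ρ * s [ZMOD p] := by
    rw [add_mul]
    exact (sub_one_mul_sub_one_ediv_two_mul_modEq hpodd hodd hs).add_right _
  have hδ : (p - 1) * (q - 1) / 2 = (p + 1) / 2 * q - (q + (p - 1) / 2) := by
    rw [sub_one_mul_sub_one_ediv_two hpodd, show (p + 1) / 2 = (p - 1) / 2 + 1 by omega]
    ring
  calc (p - 1) * (q - 1) / 2 + ρ < (p + 1) / 2 * q := by linarith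
    _ ≤ ((s - 1) / 2 + ρ * s) % p * q := mul_le_mul_of_nonneg_right hrρ hq
    _ = ((p - 1) * (q - 1) / 2 + ρ) * s % p * q := by rw [hresidue.eq]

theorem stmt11 (p q k r rb ρ : ℤ) (hp : 1 < p) (hq : 1 < q)
    (hpq : Int.gcd p q = 1) (hpodd : Odd p)
    (hqkr : q = k * p + r) (hr0 : 0 < r) (hrp : r < p)
    (hrb0 : 0 < rb) (hrbp : rb < p) (hrrb : r * rb ≡ 1 [ZMOD p])
    (hodd : Odd rb)
    (hρ0 : 0 ≤ ρ) (hρ1 : ρ ≤ (p + 1) / 2)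
    (hrρ : (p + 1) / 2 ≤ ((rb - 1) / 2 + ρ * rb) % p) :
    (p - 1) * (q - 1) / 2 + ρ ∉ Spq p q := by
  have hs : q * rb ≡ 1 [ZMOD p] :=
    Int.ModEq.trans (Int.modEq_iff_dvd.mpr ⟨-(k * rb), by rw [hqkr]; ring⟩) hrrb
  exact stmt11_general (by omega) (by omega) hpodd hs hodd (by omega) hrρ
end

section
/- Let p, q > 1 be coprime integers with p even and k + l even. Let ρ ≥ 0 be an integer with r_ρ ≤ p/2 − 1. Then δ + ρ ∈ S(p,q); indeed there exists an integer t ≥ 0 with δ + ρ = t·p + r_ρ·q. -/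
/-- The number `δ`, half of the conductor `(p - 1) * (q - 1)` of the semigroup
`S(p,q)`. The division is exact when `p` and `q` are coprime; otherwise it rounds down. -/
def halfConductor (p q : ℤ) : ℤ := (p - 1) * (q - 1) / 2

section HalfConductor

variable {p q s j : ℤ}

theorem even_sub_one_sub_of_mul_eq (hs : Odd s) (hqs : q * s = 1 + j * p)
    (hj : Even p → Even j) : Even (q - 1 - j) := by
  have parity : Even (q * s) ↔ Even (1 + j * p) := by rw [hqs]
  have hs' : ¬Even s := Int.not_even_iff_odd.mpr hs
  simp only [Int.even_mul, Int.even_add, Int.even_sub, Int.not_even_one] at parity ⊢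
  tauto

theorem halfConductor_eq_add (hs : Odd s) (hqs : q * s = 1 + j * p) (hj : Even p → Even j) :
    halfConductor p q = (s - 1) / 2 * q + (q - 1 - j) / 2 * p := by
  have hs2 : 2 * ((s - 1) / 2) = s - 1 := Int.two_mul_ediv_two_of_even (hs.sub_odd odd_one)
  have hj2 : 2 * ((q - 1 - j) / 2) = q - 1 - j :=
    Int.two_mul_ediv_two_of_even (even_sub_one_sub_of_mul_eq hs hqs hj)
  refine Int.ediv_eq_of_eq_mul_right two_ne_zero ?_
  linear_combination -hqs - q * hs2 - p * hj2

theorem halfConductor_add_modEq (hs : Odd s) (hqs : q * s = 1 + j * p) (hj : Even p → Even j)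
    (ρ : ℤ) : halfConductor p q + ρ ≡ ((s - 1) / 2 + ρ * s) * q [ZMOD p] := by
  rw [halfConductor_eq_add hs hqs hj]
  refine (Int.modEq_iff_dvd.mpr ⟨(q - 1 - j) / 2 - ρ * j, ?_⟩).symm
  linear_combination -ρ * hqs

theorem mul_lt_halfConductor_add_add {u ρ : ℤ} (hq : 0 ≤ q) (hu : 2 * u < p) (hρ : -p < 2 * ρ) :
    u * q < halfConductor p q + ρ + p := by
  have hδ : (p - 1) * (q - 1) ≤ 2 * halfConductor p q + 1 := by
    unfold halfConductor
    omega
  have huq : 2 * u * q ≤ (p - 1) * q := mul_le_mul_of_nonneg_right (by omega) hq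
  linarith

end HalfConductor

theorem exists_nonneg_eq_mul_add_of_modEq {p n m : ℤ} (hp : 0 < p) (h : n ≡ m [ZMOD p])
    (hlt : m < n + p) : ∃ t : ℤ, 0 ≤ t ∧ n = t * p + m := by
  obtain ⟨t, ht⟩ := h.symm.dvd
  have ht' : 0 < (t + 1) * p := by linarith
  exact ⟨t, Int.lt_add_one_iff.mp (pos_of_mul_pos_left ht' hp.le), by linarith⟩

theorem odd_of_mul_eq_one_add {p r s l : ℤ} (hp : Even p) (hrs : r * s = 1 + l * p) : Odd s :=
  Int.Odd.of_mul_right (hrs ▸ odd_one.add_even (hp.mul_left l))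

theorem stmt14_general {p q k r rb l ρ : ℤ} (hp : 0 < p) (hq : 0 ≤ q)
    (hqkr : q = k * p + r) (hrb : Odd rb) (hrrb : r * rb = 1 + l * p)
    (hkl : Even p → Even (k + l)) (hρ : -p < 2 * ρ)
    (hrρ : 2 * (((rb - 1) / 2 + ρ * rb) % p) < p) :
    halfConductor p q + ρ ∈ Spq p q ∧
    ∃ t : ℤ, 0 ≤ t ∧
      halfConductor p q + ρ = t * p + (((rb - 1) / 2 + ρ * rb) % p) * q := by
  have hqrb : q * rb = 1 + (k * rb + l) * p := by
    linear_combination rb * hqkr + hrrb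
  have hj : Even p → Even (k * rb + l) := fun hpeven ↦ by
    simpa only [Int.even_add, Int.even_mul, Int.not_even_iff_odd.mpr hrb, or_false] using hkl hpeven
  have hmod : halfConductor p q + ρ ≡ (((rb - 1) / 2 + ρ * rb) % p) * q [ZMOD p] :=
    (halfConductor_add_modEq hrb hqrb hj ρ).trans ((Int.mod_modEq _ p).symm.mul_right q)
  obtain ⟨t, ht, h⟩ :=
    exists_nonneg_eq_mul_add_of_modEq hp hmod (mul_lt_halfConductor_add_add hq hrρ hρ)
  exact ⟨⟨t, _, ht, Int.emod_nonneg _ hp.ne', h⟩, t, ht, h⟩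

theorem stmt14 (p q k r rb l ρ : ℤ) (hp : 1 < p) (hq : 1 < q)
    (hpq : Int.gcd p q = 1) (hpeven : Even p)
    (hqkr : q = k * p + r) (hr0 : 0 < r) (hrp : r < p)
    (hrb0 : 0 < rb) (hrbp : rb < p) (hrrb : r * rb = 1 + l * p)
    (hkl : Even (k + l))
    (hρ0 : 0 ≤ ρ)
    (hrρ : ((rb - 1) / 2 + ρ * rb) % p ≤ p / 2 - 1) :
    (p - 1) * (q - 1) / 2 + ρ ∈ Spq p q ∧
    ∃ t : ℤ, 0 ≤ t ∧
      (p - 1) * (q - 1) / 2 + ρ = t * p + (((rb - 1) / 2 + ρ * rb) % p) * q := by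
  exact stmt14_general (by omega) (by omega) hqkr (odd_of_mul_eq_one_add hpeven hrrb) hrrb
    (fun _ ↦ hkl) (by omega) (by omega)
end

section
/- Let p, q > 1 be coprime integers with p even and k + l odd. Let ρ be an integer with 0 ≤ ρ ≤ p/2 − 1 and r′_ρ ≥ p/2. Then δ + ρ ∉ S(p,q). -/
section

variable {p q a n : ℤ}

theorem mul_emod_mul_le_of_mem_Spq {m : ℤ} (hp : 0 ≤ p) (hq : 0 ≤ q)
    (ha : q * a ≡ 1 [ZMOD p]) (hm : m ∈ Spq p q) : m * a % p * q ≤ m := by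
  obtain ⟨t, u, ht, hu, rfl⟩ := hm
  have hcong : (t * p + u * q) * a ≡ u [ZMOD p] :=
    calc (t * p + u * q) * a = u * (q * a) + p * (t * a) := by ring
      _ ≡ u * (q * a) [ZMOD p] := Int.modEq_add_fac_self
      _ ≡ u * 1 [ZMOD p] := ha.mul_left u
      _ = u := mul_one u
  have hrem : u % p ≤ u := by
    linarith [Int.emod_add_mul_ediv u p, mul_nonneg hp (Int.ediv_nonneg hu hp)]
  calc (t * p + u * q) * a % p * q = u % p * q := by rw [hcong.eq]
    _ ≤ u * q := mul_le_mul_of_nonneg_right hrem hq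
    _ ≤ t * p + u * q := le_add_of_nonneg_left (mul_nonneg ht hp)

theorem odd_of_isCoprime_of_even (h : IsCoprime p q) (hp : Even p) : Odd q := by
  obtain ⟨u, v, huv⟩ := h
  have hodd : Odd (u * p + v * q) := huv ▸ odd_one
  have hvq : Odd (v * q) := (Int.odd_add'.mp hodd).mpr (hp.mul_left u)
  exact (Int.odd_mul.mp hvq).2

theorem even_sub_one_mul_sub_one_of_isCoprime (h : IsCoprime p q) :
    Even ((p - 1) * (q - 1)) := by
  rcases Int.even_or_odd p with hp | hp
  · exact ((odd_of_isCoprime_of_even h hp).sub_odd odd_one).mul_left _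
  · exact (hp.sub_odd odd_one).mul_right _

theorem sub_one_mul_sub_one_mul_modEq (ha : q * a = 1 + n * p) (hpa : Odd (p + a))
    (hn : Even p → Odd n) : (p - 1) * (q - 1) * a ≡ p + a - 1 [ZMOD 2 * p] := by
  have heven : Even ((p - 1) * n - a) := by
    rcases Int.even_or_odd p with hp | hp
    · exact ((hp.sub_odd odd_one).mul (hn hp)).sub_odd ((Int.odd_add'.mp hpa).mpr hp)
    · exact ((hp.sub_odd odd_one).mul_right n).sub ((Int.odd_add.mp hpa).mp hp)
  obtain ⟨c, hc⟩ := heven.two_dvd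
  exact (Int.modEq_iff_dvd.mpr ⟨c, by linear_combination (p - 1) * ha + p * hc⟩).symm

theorem half_sub_one_mul_sub_one_add_mul_modEq (ha : q * a = 1 + n * p) (hpa : Odd (p + a))
    (hn : Even p → Odd n) (ρ : ℤ) :
    ((p - 1) * (q - 1) / 2 + ρ) * a ≡ (p + a - 1) / 2 + ρ * a [ZMOD p] := by
  have hcop : IsCoprime p q := ⟨-n, a, by linear_combination ha⟩
  have hδ := Int.two_mul_ediv_two_of_even (even_sub_one_mul_sub_one_of_isCoprime hcop)
  have hhalf := Int.two_mul_ediv_two_of_even (hpa.sub_odd odd_one)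
  have hdouble : 2 * ((p - 1) * (q - 1) / 2 * a) ≡ 2 * ((p + a - 1) / 2) [ZMOD 2 * p] := by
    rw [← mul_assoc, hδ, hhalf]
    exact sub_one_mul_sub_one_mul_modEq ha hpa hn
  rw [add_mul]
  exact (hdouble.mul_left_cancel' two_ne_zero).add_right _

/-- Replacing `a` by `a + p` replaces `n` by `n + q`, so for coprime `p` and `q` exactly one of
these two inverses of `q` modulo `p` satisfies both parity conditions. -/
theorem stmt16_general {ρ : ℤ} (hp : 0 < p) (hq : 0 ≤ q) (ha : q * a = 1 + n * p)
    (hpa : Odd (p + a)) (hn : Even p → Odd n) (hρ : 2 * ρ + 1 < p + q)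
    (hrem : p ≤ 2 * (((p + a - 1) / 2 + ρ * a) % p)) :
    (p - 1) * (q - 1) / 2 + ρ ∉ Spq p q := by
  intro hmem
  have hcop : IsCoprime p q := ⟨-n, a, by linear_combination ha⟩
  have hδ := Int.two_mul_ediv_two_of_even (even_sub_one_mul_sub_one_of_isCoprime hcop)
  have hinv : q * a ≡ 1 [ZMOD p] := by
    rw [ha, mul_comm]
    exact Int.modEq_add_fac_self
  have hle := mul_emod_mul_le_of_mem_Spq hp.le hq hinv hmem
  rw [half_sub_one_mul_sub_one_add_mul_modEq ha hpa hn ρ] at hle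
  have hpq : p * q ≤ 2 * ((p - 1) * (q - 1) / 2 + ρ) := by
    linarith [mul_le_mul_of_nonneg_right hrem hq]
  linarith

end

theorem stmt16 (p q k r rb l ρ : ℤ) (hp : 1 < p) (hq : 1 < q)
    (hpq : Int.gcd p q = 1) (hpeven : Even p)
    (hqkr : q = k * p + r) (hr0 : 0 < r) (hrp : r < p)
    (hrb0 : 0 < rb) (hrbp : rb < p) (hrrb : r * rb = 1 + l * p)
    (hkl : Odd (k + l))
    (hρ0 : 0 ≤ ρ) (hρ1 : ρ ≤ p / 2 - 1)
    (hrρ : p / 2 ≤ ((p + rb - 1) / 2 + ρ * rb) % p) :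
    (p - 1) * (q - 1) / 2 + ρ ∉ Spq p q := by
  have hrb : Odd rb :=
    odd_of_isCoprime_of_even ⟨-l, r, by linear_combination hrrb⟩ hpeven
  have hn : Odd (k * rb + l) := by simpa [Int.odd_add, Int.odd_mul, hrb] using hkl
  have hhalf : 2 * (p / 2) = p := Int.two_mul_ediv_two_of_even hpeven
  exact stmt16_general (by lia) (by lia) (by rw [hqkr]; linear_combination hrrb)
    (hpeven.add_odd hrb) (fun _ ↦ hn) (by lia) (by linarith)
end
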